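/- Let D ⊂ ℂⁿ be a bounded α-regular domain, K ⊂ D a compact set, and ψ ∈ C(K) with sup_K ψ < 0 admitting a negative α-subharmonic extension to D. Then a point z₀ ∈ K is locally (α,ψ)-regular if and only if it is locally α-regular, i.e., for every neighborhood B ⊂ D of z₀ one has ω*_α(z₀, K ∩ B̄, D) = −1. -/

import Mathlib

open MeasureTheory Filter Topology Complex Metric

noncomputable section

/-- Complex `n`-space. -/
abbrev Cn (n : ℕ) := Fin n → ℂ

/-- The Wirtinger derivative `∂f/∂z_j` of a (real-differentiable) function `f : ℂⁿ → ℂ`. -/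
noncomputable def wdz {n : ℕ} (j : Fin n) (f : Cn n → ℂ) (z : Cn n) : ℂ :=
  (fderiv ℝ f z (Pi.single j 1) - Complex.I * fderiv ℝ f z (Pi.single j Complex.I)) / 2

/-- The Wirtinger derivative `∂f/∂z̄_j` of a (real-differentiable) function `f : ℂⁿ → ℂ`. -/
noncomputable def wdzbar {n : ℕ} (j : Fin n) (f : Cn n → ℂ) (z : Cn n) : ℂ :=
  (fderiv ℝ f z (Pi.single j 1) + Complex.I * fderiv ℝ f z (Pi.single j Complex.I)) / 2

/-- The square of the Euclidean norm `|z|² = ∑ |z_i|²` on `ℂⁿ`. -/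
noncomputable def sqNorm {n : ℕ} (z : Cn n) : ℝ := ∑ i, Complex.normSq (z i)

/-- A closed, strictly positive differential form `α` of bidegree `(n-1, n-1)` with `C¹`
coefficients on `ℂⁿ`, recorded through its normalized coefficient matrix:  `coeff j k` is
the Hermitian positive-definite matrix `A_{jk}` such that
`dd^c u ∧ α = (∑_{j,k} A_{jk} ∂²u/∂z_j∂z̄_k) dV`.  In these terms closedness of `α`
reads `∑_j ∂A_{jk}/∂z_j = 0` for every `k` (the conjugate identity follows by
Hermitian symmetry). -/
structure AlphaForm (n : ℕ) where
  coeff : Fin n → Fin n → Cn n → ℂ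
  contDiff : ∀ j k, ContDiff ℝ 1 (coeff j k)
  hermitian : ∀ j k z, coeff k j z = starRingEnd ℂ (coeff j k z)
  strictlyPositive : ∀ z : Cn n, ∀ ξ : Fin n → ℂ, ξ ≠ 0 →
    0 < (∑ j, ∑ k, coeff j k z * ξ j * starRingEnd ℂ (ξ k)).re
  closed : ∀ k, ∀ z : Cn n, (∑ j, wdz j (coeff j k) z) = 0

/-- The second order operator `f ↦ ∑_{j,k} A_{jk} ∂²f/∂z_j∂z̄_k` representing the
top-degree form `dd^c f ∧ α` (with respect to Lebesgue measure). -/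
noncomputable def alphaOp {n : ℕ} (A : AlphaForm n) (f : Cn n → ℂ) (z : Cn n) : ℂ :=
  ∑ j, ∑ k, A.coeff j k z * wdzbar k (wdz j f) z

/-- The operator `alphaOp` applied to a real-valued function, returning the real part. -/
noncomputable def alphaOpR {n : ℕ} (A : AlphaForm n) (ω : Cn n → ℝ) (z : Cn n) : ℝ :=
  (alphaOp A (fun w => (ω w : ℂ)) z).re

/-- `u : ℂⁿ → EReal` is `α`-subharmonic on `D`: it is finite-or-`-∞`, strongly upper
semicontinuous on `D`, locally integrable on `D`, and the current `dd^c u ∧ α` is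
positive, i.e. `∫_D u · (α ∧ dd^c ω) ≥ 0` for every nonnegative test function `ω` on `D`. -/
def IsAlphaSubharmonicE {n : ℕ} (A : AlphaForm n) (D : Set (Cn n)) (u : Cn n → EReal) : Prop :=
  (∀ z ∈ D, u z ≠ ⊤) ∧
  UpperSemicontinuousOn u D ∧
  (∀ z₀ ∈ D, ∀ S : Set (Cn n),
      (∃ N ∈ 𝓝 z₀, volume (N \ S) = 0) → Filter.limsup u (𝓝[S] z₀) = u z₀) ∧
  LocallyIntegrableOn (fun z => (u z).toReal) D volume ∧
  ∀ ω : Cn n → ℝ, ContDiff ℝ (⊤ : ℕ∞) ω → HasCompactSupport ω → tsupport ω ⊆ D →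
    (∀ z, 0 ≤ ω z) → 0 ≤ ∫ z in D, (u z).toReal * alphaOpR A ω z

/-- A real-valued function is `α`-subharmonic on `D` if it is so as an `EReal`-valued
function. -/
def IsAlphaSubharmonic {n : ℕ} (A : AlphaForm n) (D : Set (Cn n)) (u : Cn n → ℝ) : Prop :=
  IsAlphaSubharmonicE A D (fun z => (u z : EReal))

/-- `h` is `α`-harmonic on the open set `U`: `dd^c h ∧ α = 0` there, in the sense of
currents. -/
def IsAlphaHarmonicOn {n : ℕ} (A : AlphaForm n) (U : Set (Cn n)) (h : Cn n → ℝ) : Prop :=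
  LocallyIntegrableOn h U volume ∧
  ∀ ω : Cn n → ℝ, ContDiff ℝ (⊤ : ℕ∞) ω → HasCompactSupport ω → tsupport ω ⊆ U →
    (∫ z in U, h z * alphaOpR A ω z) = 0

/-- `u` is strictly `α`-subharmonic on `G`: for every compact subdomain `G' ⋐ G` there is
`ε > 0` with `u - ε|z|²` `α`-subharmonic on `G'`. -/
def IsStrictlyAlphaSubharmonic {n : ℕ} (A : AlphaForm n) (G : Set (Cn n)) (u : Cn n → ℝ) :
    Prop :=
  ∀ G' : Set (Cn n), IsOpen G' → IsCompact (closure G') → closure G' ⊆ G →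
    ∃ ε > (0 : ℝ), IsAlphaSubharmonic A G' (fun z => u z - ε * sqNorm z)

/-- `D` is a bounded `α`-regular domain: a bounded domain carrying a negative
`α`-subharmonic exhaustion `ρ` with boundary limit `0`. -/
def IsAlphaRegularDomain {n : ℕ} (A : AlphaForm n) (D : Set (Cn n)) : Prop :=
  IsOpen D ∧ IsConnected D ∧ Bornology.IsBounded D ∧
  ∃ ρ : Cn n → ℝ, IsAlphaSubharmonic A D ρ ∧ (∀ z ∈ D, ρ z < 0) ∧
    ∀ ζ ∈ frontier D, Filter.Tendsto ρ (𝓝[D] ζ) (𝓝 0)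

/-- `D` is a strongly `α`-regular domain: `D = {ρ < 0}` for some `ρ` which is `C²` and
strictly `α`-subharmonic on a neighborhood `D⁺` of `closure D`. -/
def IsStronglyAlphaRegularDomain {n : ℕ} (A : AlphaForm n) (D : Set (Cn n)) : Prop :=
  IsOpen D ∧ IsConnected D ∧ Bornology.IsBounded D ∧
  ∃ Dp : Set (Cn n), IsOpen Dp ∧ closure D ⊆ Dp ∧
    ∃ ρ : Cn n → ℝ, ContDiffOn ℝ 2 ρ Dp ∧ IsStrictlyAlphaSubharmonic A Dp ρ ∧
      D = {z ∈ Dp | ρ z < 0}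

/-- The class `U(E, D, ψ)` of `α`-subharmonic functions `u` on `D` with `u ≤ ψ` on `E`
and `u < 0` on `D`. -/
def Uclass {n : ℕ} (A : AlphaForm n) (E D : Set (Cn n)) (ψ : Cn n → ℝ) :
    Set (Cn n → ℝ) :=
  {u | IsAlphaSubharmonic A D u ∧ (∀ z ∈ E, u z ≤ ψ z) ∧ ∀ z ∈ D, u z < 0}

/-- The weighted extremal function `ω_α(z, E, D, ψ)`. -/
noncomputable def omegaW {n : ℕ} (A : AlphaForm n) (E D : Set (Cn n)) (ψ : Cn n → ℝ)
    (z : Cn n) : ℝ :=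
  sSup ((fun u : Cn n → ℝ => u z) '' Uclass A E D ψ)

/-- The weighted `α`-subharmonic measure `ω*_α(z, E, D, ψ)`: the upper semicontinuous
regularization of `ω_α(·, E, D, ψ)`. -/
noncomputable def omegaWStar {n : ℕ} (A : AlphaForm n) (E D : Set (Cn n)) (ψ : Cn n → ℝ)
    (z : Cn n) : ℝ :=
  Filter.limsup (omegaW A E D ψ) (𝓝 z)

/-- The (unweighted) extremal function `ω_α(z, E, D)`. -/
noncomputable def omega0 {n : ℕ} (A : AlphaForm n) (E D : Set (Cn n)) : Cn n → ℝ :=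
  omegaW A E D (fun _ => (-1 : ℝ))

/-- The (unweighted) `α`-subharmonic measure `ω*_α(z, E, D)`. -/
noncomputable def omega0Star {n : ℕ} (A : AlphaForm n) (E D : Set (Cn n)) : Cn n → ℝ :=
  omegaWStar A E D (fun _ => (-1 : ℝ))

/-- `S` is `α`-polar in `D`: there is an `α`-subharmonic `ρ` on `D`, not identically
`-∞`, with `ρ = -∞` on `S`. -/
def IsAlphaPolar {n : ℕ} (A : AlphaForm n) (D S : Set (Cn n)) : Prop :=
  ∃ ρ : Cn n → EReal, IsAlphaSubharmonicE A D ρ ∧ (∃ z ∈ D, ρ z ≠ ⊥) ∧ ∀ z ∈ S, ρ z = ⊥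

/-- `u` is plurisubharmonic on `D`: upper semicontinuous, locally integrable, and with
positive semidefinite complex Hessian in the sense of distributions. -/
def IsPlurisubharmonic {n : ℕ} (D : Set (Cn n)) (u : Cn n → ℝ) : Prop :=
  UpperSemicontinuousOn u D ∧ LocallyIntegrableOn u D volume ∧
  ∀ ξ : Fin n → ℂ, ∀ ω : Cn n → ℝ, ContDiff ℝ (⊤ : ℕ∞) ω → HasCompactSupport ω →
    tsupport ω ⊆ D → (∀ z, 0 ≤ ω z) →
    0 ≤ ∫ z in D, u z *
      (∑ j, ∑ k, ξ j * starRingEnd ℂ (ξ k) * wdzbar k (wdz j (fun w => (ω w : ℂ))) z).re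

/-- The class `U(E,D)` for the plurisubharmonic measure. -/
def UclassPsh {n : ℕ} (E D : Set (Cn n)) : Set (Cn n → ℝ) :=
  {u | IsPlurisubharmonic D u ∧ (∀ z ∈ E, u z ≤ -1) ∧ ∀ z ∈ D, u z < 0}

/-- The plurisubharmonic extremal function `ω(z, E, D)`. -/
noncomputable def omegaPsh {n : ℕ} (E D : Set (Cn n)) (z : Cn n) : ℝ :=
  sSup ((fun u : Cn n → ℝ => u z) '' UclassPsh E D)

/-- The plurisubharmonic measure `ω*(z, E, D)`. -/
noncomputable def omegaPshStar {n : ℕ} (E D : Set (Cn n)) (z : Cn n) : ℝ :=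
  Filter.limsup (omegaPsh E D) (𝓝 z)

end

section Helpers

lemma contDiff_wdz {n : ℕ} (j : Fin n) {f : Cn n → ℂ} (hf : ContDiff ℝ 2 f) :
    ContDiff ℝ 1 (wdz j f) := by
  have h := hf.fderiv_right (m := 1) (by norm_num)
  unfold wdz
  exact ((h.clm_apply contDiff_const).sub
    (contDiff_const.mul (h.clm_apply contDiff_const))).div_const _

lemma contDiff_wdzbar {n : ℕ} (j : Fin n) {f : Cn n → ℂ} (hf : ContDiff ℝ 2 f) :
    ContDiff ℝ 1 (wdzbar j f) := by
  have h := hf.fderiv_right (m := 1) (by norm_num)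
  unfold wdzbar
  exact ((h.clm_apply contDiff_const).add
    (contDiff_const.mul (h.clm_apply contDiff_const))).div_const _

lemma continuous_wdz {n : ℕ} (j : Fin n) {f : Cn n → ℂ} (hf : ContDiff ℝ 1 f) :
    Continuous (wdz j f) := by
  have h := hf.continuous_fderiv (by norm_num)
  unfold wdz
  fun_prop

lemma tsupport_wdz {n : ℕ} (j : Fin n) (f : Cn n → ℂ) : tsupport (wdz j f) ⊆ tsupport f := by
  apply closure_minimal _ (isClosed_tsupport f)
  intro z hz
  by_contra hzf
  apply hz
  have := notMem_tsupport_iff_eventuallyEq.1 hzf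
  simp [wdz, this.fderiv_eq]

lemma tsupport_wdzbar {n : ℕ} (j : Fin n) (f : Cn n → ℂ) :
    tsupport (wdzbar j f) ⊆ tsupport f := by
  apply closure_minimal _ (isClosed_tsupport f)
  intro z hz
  by_contra hzf
  apply hz
  have := notMem_tsupport_iff_eventuallyEq.1 hzf
  simp [wdzbar, this.fderiv_eq]

lemma wdz_comm {n : ℕ} (j k : Fin n) {f : Cn n → ℂ} (hf : ContDiff ℝ 2 f) (z : Cn n) :
    wdzbar k (wdz j f) z = wdz j (wdzbar k f) z := by
  have hd : DifferentiableAt ℝ (fderiv ℝ f) z :=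
    ((hf.fderiv_right (m := 1) (by norm_num)).differentiable (by norm_num)) z
  have hsymm : IsSymmSndFDerivAt ℝ f z :=
    hf.contDiffAt.isSymmSndFDerivAt (by simp)
  have hv : ∀ v, HasFDerivAt (fun w => fderiv ℝ f w v)
      ((ContinuousLinearMap.apply ℝ ℂ v).comp (fderiv ℝ (fderiv ℝ f) z)) z := fun v =>
    (ContinuousLinearMap.apply ℝ ℂ v).hasFDerivAt.comp z hd.hasFDerivAt
  have h1 : ∀ v, fderiv ℝ (wdz j f) z v = (fderiv ℝ (fderiv ℝ f) z v (Pi.single j 1)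
      - Complex.I * fderiv ℝ (fderiv ℝ f) z v (Pi.single j Complex.I)) / 2 := by
    intro v
    have := (((hv (Pi.single j 1)).sub ((hv (Pi.single j Complex.I)).const_mul Complex.I)).mul_const
      (2⁻¹ : ℂ))
    have h2 : wdz j f = fun w => (fderiv ℝ f w (Pi.single j 1)
      - Complex.I * fderiv ℝ f w (Pi.single j Complex.I)) * 2⁻¹ := by
      ext w; simp [wdz, div_eq_mul_inv]
    rw [h2]
    erw [this.fderiv]
    simp
    ring
  have h1' : ∀ v, fderiv ℝ (wdzbar k f) z v = (fderiv ℝ (fderiv ℝ f) z v (Pi.single k 1)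
      + Complex.I * fderiv ℝ (fderiv ℝ f) z v (Pi.single k Complex.I)) / 2 := by
    intro v
    have := (((hv (Pi.single k 1)).add ((hv (Pi.single k Complex.I)).const_mul Complex.I)).mul_const
      (2⁻¹ : ℂ))
    have h2 : wdzbar k f = fun w => (fderiv ℝ f w (Pi.single k 1)
      + Complex.I * fderiv ℝ f w (Pi.single k Complex.I)) * 2⁻¹ := by
      ext w; simp [wdzbar, div_eq_mul_inv]
    rw [h2]
    erw [this.fderiv]
    simp
    ring
  rw [wdzbar, wdz, h1, h1, h1', h1']
  rw [hsymm (Pi.single k 1) (Pi.single j 1), hsymm (Pi.single k 1) (Pi.single j Complex.I),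
    hsymm (Pi.single k Complex.I) (Pi.single j 1),
    hsymm (Pi.single k Complex.I) (Pi.single j Complex.I)]
  ring

lemma integrable_mul_wdz {n : ℕ} (j : Fin n) {a g : Cn n → ℂ} (ha : Continuous a)
    (hg : ContDiff ℝ 1 g) (hc : HasCompactSupport g) :
    Integrable (fun z => a z * wdz j g z) := by
  refine (ha.mul (continuous_wdz j hg)).integrable_of_hasCompactSupport ?_
  exact (HasCompactSupport.mono' hc
    ((subset_tsupport _).trans (tsupport_wdz j g))).mul_left

lemma integral_mul_wdz {n : ℕ} (j : Fin n) {a g : Cn n → ℂ} (ha : ContDiff ℝ 1 a)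
    (hg : ContDiff ℝ 1 g) (hc : HasCompactSupport g) :
    ∫ z, a z * wdz j g z = - ∫ z, wdz j a z * g z := by
  have hda := ha.continuous_fderiv (by norm_num)
  have hdg := hg.continuous_fderiv (by norm_num)
  have hac := ha.continuous
  have hgc := hg.continuous
  have i1 : ∀ v, Integrable (fun x ↦ fderiv ℝ a x v * g x) := fun v =>
    Continuous.integrable_of_hasCompactSupport (by fun_prop) hc.mul_left
  have i2 : ∀ v, Integrable (fun x ↦ a x * fderiv ℝ g x v) := fun v =>
    Continuous.integrable_of_hasCompactSupport (by fun_prop) ((hc.fderiv_apply ℝ v).mul_left)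
  have i3 : Integrable (fun x ↦ a x * g x) :=
    Continuous.integrable_of_hasCompactSupport (by fun_prop) hc.mul_left
  have key : ∀ v, ∫ x, a x * fderiv ℝ g x v = - ∫ x, fderiv ℝ a x v * g x := fun v =>
    integral_mul_fderiv_eq_neg_fderiv_mul_of_integrable (i1 v) (i2 v) i3
      (fun x _ => ha.differentiable (by norm_num) x)
      (fun x _ => hg.differentiable (by norm_num) x)
  have e1 : (fun z => a z * wdz j g z) = fun z => (2⁻¹ : ℂ) * (a z * fderiv ℝ g z (Pi.single j 1))
      - (Complex.I * 2⁻¹) * (a z * fderiv ℝ g z (Pi.single j Complex.I)) := by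
    ext z; simp only [wdz]; ring
  have e2 : (fun z => wdz j a z * g z) = fun z => (2⁻¹ : ℂ) * (fderiv ℝ a z (Pi.single j 1) * g z)
      - (Complex.I * 2⁻¹) * (fderiv ℝ a z (Pi.single j Complex.I) * g z) := by
    ext z; simp only [wdz]; ring
  rw [e1, e2, integral_sub ((i2 _).const_mul _) ((i2 _).const_mul _),
    integral_sub ((i1 _).const_mul _) ((i1 _).const_mul _), integral_const_mul,
    integral_const_mul, integral_const_mul, integral_const_mul, key, key]
  ring

lemma integral_alphaOp {n : ℕ} (A : AlphaForm n) {f : Cn n → ℂ} (hf : ContDiff ℝ 2 f)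
    (hc : HasCompactSupport f) : Integrable (alphaOp A f) ∧ ∫ z, alphaOp A f z = 0 := by
  have e : alphaOp A f = fun z => ∑ k, ∑ j, A.coeff j k z * wdz j (wdzbar k f) z := by
    ext z
    rw [alphaOp, Finset.sum_comm]
    simp only [wdz_comm _ _ hf]
  have hck : ∀ k, HasCompactSupport (wdzbar k f) := fun k =>
    HasCompactSupport.mono' hc ((subset_tsupport _).trans (tsupport_wdzbar k f))
  have hint : ∀ j k, Integrable (fun z => A.coeff j k z * wdz j (wdzbar k f) z) := fun j k =>
    integrable_mul_wdz j (A.contDiff j k).continuous (contDiff_wdzbar k hf) (hck k)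
  rw [e]
  refine ⟨integrable_finsetSum _ fun k _ => integrable_finsetSum _ fun j _ => hint j k, ?_⟩
  rw [integral_finsetSum _ fun k _ => integrable_finsetSum _ fun j _ => hint j k]
  refine Finset.sum_eq_zero fun k _ => ?_
  rw [integral_finsetSum _ fun j _ => hint j k]
  have hint2 : ∀ j, Integrable (fun z => wdz j (A.coeff j k) z * wdzbar k f z) := fun j =>
    ((continuous_wdz j (A.contDiff j k)).mul
      (contDiff_wdzbar k hf).continuous).integrable_of_hasCompactSupport (hck k).mul_left
  simp only [integral_mul_wdz _ (A.contDiff _ k) (contDiff_wdzbar k hf) (hck k)]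
  rw [Finset.sum_neg_distrib, ← integral_finsetSum _ fun j _ => hint2 j]
  simp only [← Finset.sum_mul, A.closed k]
  simp

lemma setIntegral_alphaOpR {n : ℕ} (A : AlphaForm n) (D : Set (Cn n)) {ω : Cn n → ℝ}
    (hω : ContDiff ℝ (⊤ : ℕ∞) ω) (hc : HasCompactSupport ω) (hs : tsupport ω ⊆ D) :
    ∫ z in D, alphaOpR A ω z = 0 := by
  have hsupp : tsupport (fun w => (ω w : ℂ)) ⊆ tsupport ω := by
    apply closure_mono
    intro z hz hz'
    apply hz
    simp [hz']
  have hf : ContDiff ℝ 2 (fun w => (ω w : ℂ)) :=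
    Complex.ofRealCLM.contDiff.comp (contDiff_infty.1 hω 2)
  have hfc : HasCompactSupport (fun w => (ω w : ℂ)) :=
    HasCompactSupport.mono' hc ((subset_tsupport _).trans hsupp)
  obtain ⟨h1, h2⟩ := integral_alphaOp A hf hfc
  rw [setIntegral_eq_integral_of_forall_compl_eq_zero]
  · have := integral_re (𝕜 := ℂ) h1
    simp only [alphaOpR]
    simpa [h2] using this
  · intro z hz
    have : ∀ j k, wdzbar k (wdz j (fun w => (ω w : ℂ))) z = 0 := by
      intro j k
      by_contra h
      exact hz (hs (hsupp (tsupport_wdz j _ (tsupport_wdzbar k _ (subset_tsupport _ h)))))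
    simp [alphaOpR, alphaOp, this]

lemma nhdsWithin_neBot_of_full {n : ℕ} {z : Cn n} {S : Set (Cn n)}
    (h : ∃ N ∈ 𝓝 z, volume (N \ S) = 0) : (𝓝[S] z).NeBot := by
  obtain ⟨N, hN, h0⟩ := h
  rw [← mem_closure_iff_nhdsWithin_neBot, mem_closure_iff_nhds]
  intro t ht
  by_contra hne
  have hsub : t ∩ N ⊆ N \ S := by
    intro x hx
    exact ⟨hx.2, fun hxS => hne ⟨x, hx.1, hxS⟩⟩
  have hpos := Measure.measure_pos_of_mem_nhds (volume : Measure (Cn n)) (inter_mem ht hN)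
  exact absurd (measure_mono_null hsub h0) hpos.ne'

lemma isAlphaSubharmonic_const {n : ℕ} (A : AlphaForm n) (D : Set (Cn n)) (c : ℝ) :
    IsAlphaSubharmonic A D (fun _ => c) := by
  refine ⟨fun z _ => EReal.coe_ne_top _, upperSemicontinuousOn_const, ?_, ?_, ?_⟩
  · intro z _ S hS
    have := nhdsWithin_neBot_of_full hS
    exact limsup_const _
  · exact locallyIntegrableOn_const _
  · intro ω h1 h2 h3 _
    simp only [EReal.toReal_coe]
    rw [integral_const_mul, setIntegral_alphaOpR A D h1 h2 h3, mul_zero]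

lemma isAlphaSubharmonic_smul {n : ℕ} {A : AlphaForm n} {D : Set (Cn n)} {u : Cn n → ℝ}
    (hu : IsAlphaSubharmonic A D u) {c : ℝ} (hc : 0 < c) :
    IsAlphaSubharmonic A D (fun z => c * u z) := by
  obtain ⟨-, h2, h3, h4, h5⟩ := hu
  have hmono : Monotone (fun x : EReal => (c : EReal) * x) := fun x y hxy =>
    mul_le_mul_of_nonneg_left hxy (by exact_mod_cast hc.le)
  have hc0 : (c : EReal) ≠ 0 := by exact_mod_cast hc.ne'
  have hcont : Continuous (fun x : EReal => (c : EReal) * x) := by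
    rw [continuous_iff_continuousAt]
    intro x
    have := EReal.continuousAt_mul (p := ((c : EReal), x)) (Or.inl hc0) (Or.inl hc0)
      (Or.inl (EReal.coe_ne_bot c)) (Or.inl (EReal.coe_ne_top c))
    exact ContinuousAt.comp (f := fun x : EReal => ((c : EReal), x)) this (by fun_prop)
  have he : (fun z => ((c * u z : ℝ) : EReal))
      = (fun x : EReal => (c : EReal) * x) ∘ fun z => (u z : EReal) := by
    ext z; simp
  refine ⟨fun z _ => EReal.coe_ne_top _, ?_, ?_, ?_, ?_⟩
  · rw [he]
    exact hcont.comp_upperSemicontinuousOn h2 hmono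
  · intro z hz S hS
    have := nhdsWithin_neBot_of_full hS
    rw [he, ← hmono.map_limsup_of_continuousAt _ hcont.continuousAt, h3 z hz S hS]
    rfl
  · simp only [EReal.toReal_coe] at h4 ⊢
    exact h4.smul c
  · intro ω g1 g2 g3 g4
    have := h5 ω g1 g2 g3 g4
    simp only [EReal.toReal_coe, mul_assoc] at this ⊢
    rw [integral_const_mul]
    exact mul_nonneg hc.le this

lemma bddAbove_omegaW {n : ℕ} {A : AlphaForm n} {E D : Set (Cn n)} {ψ : Cn n → ℝ}
    {z : Cn n} (hz : z ∈ D) : BddAbove ((fun u : Cn n → ℝ => u z) '' Uclass A E D ψ) := by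
  refine ⟨0, ?_⟩
  rintro _ ⟨u, hu, rfl⟩
  exact (hu.2.2 z hz).le

lemma omegaW_nonpos {n : ℕ} {A : AlphaForm n} {E D : Set (Cn n)} {ψ : Cn n → ℝ}
    {z : Cn n} (hz : z ∈ D) : omegaW A E D ψ z ≤ 0 := by
  apply Real.sSup_nonpos
  rintro _ ⟨u, hu, rfl⟩
  exact (hu.2.2 z hz).le

lemma isBoundedUnder_omegaW {n : ℕ} {A : AlphaForm n} {E D : Set (Cn n)} {ψ : Cn n → ℝ}
    {z : Cn n} (hD : IsOpen D) (hz : z ∈ D) :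
    (𝓝 z).IsBoundedUnder (· ≤ ·) (omegaW A E D ψ) :=
  ⟨0, by
    rw [eventually_map]
    filter_upwards [hD.mem_nhds hz] with w hw using omegaW_nonpos hw⟩

/-- A member of the class gives a lower bound for the regularization. -/
lemma le_omegaWStar {n : ℕ} {A : AlphaForm n} {E D : Set (Cn n)} {ψ : Cn n → ℝ}
    {z : Cn n} (hD : IsOpen D) (hz : z ∈ D) {u : Cn n → ℝ} (hu : u ∈ Uclass A E D ψ) :
    u z ≤ omegaWStar A E D ψ z := by
  refine le_limsup_of_frequently_le ?_ (isBoundedUnder_omegaW hD hz)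
  intro hev
  exact hev.self_of_nhds (le_csSup (bddAbove_omegaW hz) ⟨u, hu, rfl⟩)

/-- Comparison of two regularized extremal functions under scaling. -/
lemma omegaWStar_le {n : ℕ} {A : AlphaForm n} {E E' D : Set (Cn n)} {ψ φ : Cn n → ℝ}
    {z : Cn n} (hD : IsOpen D) (hz : z ∈ D) (hne : (Uclass A E D ψ).Nonempty) {c : ℝ}
    (hc : 0 < c) (h : ∀ u ∈ Uclass A E D ψ, ∀ w ∈ E', c * u w ≤ φ w) :
    c * omegaWStar A E D ψ z ≤ omegaWStar A E' D φ z := by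
  obtain ⟨u₀, hu₀⟩ := hne
  refine le_of_forall_pos_le_add fun ε hε => ?_
  have hlt : limsup (omegaW A E' D φ) (𝓝 z) < omegaWStar A E' D φ z + ε := by
    change omegaWStar A E' D φ z < _
    linarith
  have hev := eventually_lt_of_limsup_lt hlt (isBoundedUnder_omegaW hD hz)
  have hle : omegaWStar A E D ψ z ≤ (omegaWStar A E' D φ z + ε) / c := by
    refine limsup_le_of_le (IsCoboundedUnder.of_frequently_ge (a := u₀ z) ?_) ?_
    · intro hev
      exact hev.self_of_nhds (le_csSup (bddAbove_omegaW hz) ⟨u₀, hu₀, rfl⟩)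
    · filter_upwards [hev, hD.mem_nhds hz] with w hw hwD
      refine csSup_le ⟨u₀ w, u₀, hu₀, rfl⟩ ?_
      rintro _ ⟨u, hu, rfl⟩
      have hmem : (fun z => c * u z) ∈ Uclass A E' D φ :=
        ⟨isAlphaSubharmonic_smul hu.1 hc, h u hu,
          fun z hz => mul_neg_of_pos_of_neg hc (hu.2.2 z hz)⟩
      have : c * u w ≤ omegaW A E' D φ w := le_csSup (bddAbove_omegaW hwD) ⟨_, hmem, rfl⟩
      rw [le_div_iff₀ hc]
      change u w * c ≤ _
      linarith
  rw [le_div_iff₀ hc] at hle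
  linarith

/-- Small neighbourhoods on which `ψ` is almost constant. -/
lemma exists_small_nhds {n : ℕ} {K : Set (Cn n)} {ψ : Cn n → ℝ} (hψc : ContinuousOn ψ K)
    {z₀ : Cn n} (hz₀ : z₀ ∈ K) {B : Set (Cn n)} (hB : B ∈ 𝓝 z₀) {ε : ℝ} (hε : 0 < ε) :
    ∃ B' ∈ 𝓝 z₀, closure B' ⊆ B ∧ ∀ z ∈ K ∩ closure B', |ψ z - ψ z₀| < ε := by
  have h := Metric.tendsto_nhds.1 (hψc z₀ hz₀) ε hε
  rw [eventually_nhdsWithin_iff] at h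
  obtain ⟨t, ht, htc, hts⟩ := exists_mem_nhds_isClosed_subset (inter_mem hB h)
  refine ⟨t, ht, ?_, ?_⟩
  · rw [htc.closure_eq]
    exact fun x hx => (hts hx).1
  · rw [htc.closure_eq]
    rintro z ⟨hzK, hzt⟩
    exact (hts hzt).2 hzK

end Helpers

/-- For `ψ ∈ C(K)` with `sup_K ψ < 0` admitting a negative
`α`-subharmonic extension to `D`, a point `z₀ ∈ K` is locally `(α,ψ)`-regular iff it is
locally `α`-regular, i.e. `ω*_α(z₀, K ∩ B̄, D) = -1` for every neighborhood `B ⊆ D`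
of `z₀`. -/
theorem locally_weighted_regular_iff_locally_regular {n : ℕ} (A : AlphaForm n)
    (D K : Set (Cn n)) (hD : IsAlphaRegularDomain A D) (hK : IsCompact K) (hKD : K ⊆ D)
    (ψ : Cn n → ℝ) (hψc : ContinuousOn ψ K)
    (hsup : ∃ c < (0 : ℝ), ∀ z ∈ K, ψ z ≤ c)
    (hext : ∃ ψt : Cn n → ℝ, IsAlphaSubharmonic A D ψt ∧ (∀ z ∈ D, ψt z < 0) ∧
      ∀ z ∈ K, ψt z = ψ z)
    (z₀ : Cn n) (hz₀ : z₀ ∈ K) :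
    (∀ B : Set (Cn n), B ∈ 𝓝 z₀ → omegaWStar A (K ∩ closure B) D ψ z₀ = ψ z₀) ↔
      (∀ B : Set (Cn n), B ∈ 𝓝 z₀ → B ⊆ D →
        omega0Star A (K ∩ closure B) D z₀ = -1) := by
  obtain ⟨hDo, -, -, -⟩ := hD
  have hz₀D : z₀ ∈ D := hKD hz₀
  obtain ⟨c₀, hc₀, hψle⟩ := hsup
  have hψ0 : ψ z₀ < 0 := (hψle z₀ hz₀).trans_lt hc₀
  obtain ⟨ψt, hψt, hψtneg, hψteq⟩ := hext
  have hmemψ : ∀ B : Set (Cn n), ψt ∈ Uclass A (K ∩ closure B) D ψ := fun B =>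
    ⟨hψt, fun z hz => (hψteq z hz.1).le, hψtneg⟩
  have hmem1 : ∀ B : Set (Cn n),
      (fun _ => (-1 : ℝ)) ∈ Uclass A (K ∩ closure B) D (fun _ => (-1 : ℝ)) := fun B =>
    ⟨isAlphaSubharmonic_const A D (-1), fun z _ => le_rfl, fun z _ => by norm_num⟩
  constructor
  · intro H B hB hBD
    apply le_antisymm
    · refine le_of_forall_pos_lt_add fun δ hδ => ?_
      have hε : 0 < δ * (-ψ z₀) := mul_pos hδ (by linarith)
      obtain ⟨B', hB', hcl, hsmall⟩ := exists_small_nhds hψc hz₀ hB hε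
      have hpos : 0 < -ψ z₀ + δ * (-ψ z₀) := by linarith
      have key := omegaWStar_le (A := A) (E := K ∩ closure B) (E' := K ∩ closure B')
        (ψ := fun _ => (-1 : ℝ)) (φ := ψ) hDo hz₀D ⟨_, hmem1 B⟩ hpos (by
          rintro u hu w hw
          have h1 : u w ≤ -1 := hu.2.1 w ⟨hw.1, subset_closure (hcl hw.2)⟩
          have h2 := (abs_lt.1 (hsmall w hw)).1
          nlinarith)
      rw [H B' hB'] at key
      change omegaWStar A (K ∩ closure B) D (fun _ => (-1 : ℝ)) z₀ < _
      by_contra hcon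
      push Not at hcon
      have := mul_le_mul_of_nonneg_left hcon hpos.le
      nlinarith [mul_pos hδ hε]
    · exact le_omegaWStar hDo hz₀D (hmem1 B)
  · intro H B hB
    apply le_antisymm
    · refine le_of_forall_pos_le_add fun δ hδ => ?_
      set ε := min δ (-ψ z₀ / 2) with hεdef
      have hε : 0 < ε := lt_min hδ (by linarith)
      have hε2 : ε ≤ -ψ z₀ / 2 := min_le_right _ _
      have hε1 : ε ≤ δ := min_le_left _ _
      obtain ⟨B', hB', hcl, hsmall⟩ :=
        exists_small_nhds hψc hz₀ (inter_mem hB (hDo.mem_nhds hz₀D)) hε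
      have hpos : 0 < -(ψ z₀ + ε) := by linarith
      have key := omegaWStar_le (A := A) (E := K ∩ closure B) (E' := K ∩ closure B')
        (ψ := ψ) (φ := fun _ => (-1 : ℝ)) hDo hz₀D ⟨_, hmemψ B⟩ (inv_pos.2 hpos) (by
          rintro u hu w hw
          have h1 : u w ≤ ψ w := hu.2.1 w ⟨hw.1, subset_closure (hcl hw.2).1⟩
          have h2 := (abs_lt.1 (hsmall w hw)).2
          rw [inv_mul_le_iff₀ hpos]
          linarith)
      have h1 := H B' hB' (subset_closure.trans fun x hx => (hcl hx).2)
      unfold omega0Star at h1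
      rw [h1, inv_mul_le_iff₀ hpos] at key
      linarith
    · rw [← hψteq z₀ hz₀]
      exact le_omegaWStar hDo hz₀D (hmemψ B)
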